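/- Let $(x_n)_{n \geq 1}$ be a sequence in $[0,1)$ which is not equidistributed. Then its pair correlations are not asymptotically Poissonian: there exists a real $s > 0$ such that it is not the case that $\frac{1}{N}\#\{(m,n) : 1 \leq m,n \leq N,\ m \neq n,\ \|x_m - x_n\| \leq s/N\} \to 2s$ as $N \to \infty$. -/

import Mathlib

open Finset Filter

/-- Distance to the nearest integer. -/
noncomputable def distToInt (t : ℝ) : ℝ := |t - round t|

lemma distToInt_le_abs (t : ℝ) : distToInt t ≤ |t| := by
  simpa [distToInt] using round_le t 0

section DoubleCounting

variable {α β : Type*} [DecidableEq β]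

/-- Double counting of incidences between the points of `T` and a family of subsets of `T`. -/
lemma sum_card_filter_mem (S : Finset α) (T : Finset β) (W : α → Finset β)
    (hW : ∀ n ∈ S, W n ⊆ T) :
    ∑ t ∈ T, #{n ∈ S | t ∈ W n} = ∑ n ∈ S, #(W n) := by
  have h := Finset.sum_card_bipartiteAbove_eq_sum_card_bipartiteBelow
    (s := T) (t := S) (fun t n => t ∈ W n)
  simp only [Finset.bipartiteAbove, Finset.bipartiteBelow] at h
  rw [h]
  refine Finset.sum_congr rfl fun n hn => ?_
  rw [Finset.filter_mem_eq_inter, Finset.inter_eq_right.2 (hW n hn)]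

lemma sum_card_filter_mem_sq (S : Finset α) (T : Finset β) (W : α → Finset β)
    (hW : ∀ n ∈ S, W n ⊆ T) :
    ∑ t ∈ T, #{n ∈ S | t ∈ W n} ^ 2 = ∑ p ∈ S ×ˢ S, #(W p.1 ∩ W p.2) := by
  rw [← sum_card_filter_mem (S ×ˢ S) T (fun p => W p.1 ∩ W p.2)]
  · refine Finset.sum_congr rfl fun t _ => ?_
    rw [sq, ← Finset.card_product, ← Finset.filter_product]
    simp only [Finset.mem_inter]
  · intro p hp
    exact Finset.inter_subset_left.trans (hW _ (Finset.mem_product.1 hp).1)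

end DoubleCounting

/-- The number of ordered pairs of distinct indices up to `N` whose points are within `r`. -/
noncomputable def pairCount (x : ℕ → ℝ) (N : ℕ) (r : ℝ) : ℕ :=
  #{p ∈ Finset.Icc 1 N ×ˢ Finset.Icc 1 N | p.1 ≠ p.2 ∧ distToInt (x p.1 - x p.2) ≤ r}

/-- The number of indices up to `N` whose point lies in `[a, b]`. -/
noncomputable def intervalCount (x : ℕ → ℝ) (N : ℕ) (a b : ℝ) : ℕ :=
  #{n ∈ Finset.Icc 1 N | x n ∈ Set.Icc a b}

/-- The `K` consecutive cells of length `1 / N` starting with the one containing `y`. -/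
noncomputable def window (N K : ℕ) (y : ℝ) : Finset ℕ :=
  Finset.Ico ⌊N * y⌋₊ (⌊N * y⌋₊ + K)

lemma card_window (N K : ℕ) (y : ℝ) : #(window N K y) = K := by
  simp [window]

lemma window_subset_range {N : ℕ} (hN : 0 < N) (K : ℕ) {y : ℝ} (hy : y ∈ Set.Ico (0 : ℝ) 1) :
    window N K y ⊆ Finset.range (N + K) := by
  have hN' : (0 : ℝ) < N := by exact_mod_cast hN
  have h : ⌊N * y⌋₊ < N :=
    (Nat.floor_lt (mul_nonneg hN'.le hy.1)).2 (by nlinarith [hy.2])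
  intro t ht
  simp only [window, Finset.mem_Ico, Finset.mem_range] at *
  omega

lemma distToInt_sub_le_of_floor_lt {N d : ℕ} (hN : 0 < N) {y z : ℝ} (hy : 0 ≤ y) (hz : 0 ≤ z)
    (h₁ : ⌊N * y⌋₊ < ⌊N * z⌋₊ + d) (h₂ : ⌊N * z⌋₊ < ⌊N * y⌋₊ + d) :
    distToInt (y - z) ≤ d / N := by
  have hN' : (0 : ℝ) < N := by exact_mod_cast hN
  refine (distToInt_le_abs _).trans ?_
  rw [abs_le, ← neg_div, div_le_iff₀ hN', le_div_iff₀ hN']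
  have a₁ := Nat.floor_le (mul_nonneg hN'.le hy)
  have a₂ := Nat.floor_le (mul_nonneg hN'.le hz)
  have b₁ := Nat.lt_floor_add_one ((N : ℝ) * y)
  have b₂ := Nat.lt_floor_add_one ((N : ℝ) * z)
  have c₁ : (⌊N * y⌋₊ : ℝ) + 1 ≤ ⌊N * z⌋₊ + d := by exact_mod_cast h₁
  have c₂ : (⌊N * z⌋₊ : ℝ) + 1 ≤ ⌊N * y⌋₊ + d := by exact_mod_cast h₂
  constructor <;> linarith

lemma card_window_inter_le {N : ℕ} (hN : 0 < N) (K : ℕ) {y z : ℝ} (hy : 0 ≤ y) (hz : 0 ≤ z) :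
    #(window N K y ∩ window N K z) ≤
      #{d ∈ Finset.Icc 1 K | distToInt (y - z) ≤ (d : ℕ) / N} := by
  set i := ⌊N * y⌋₊ with hi
  set j := ⌊N * z⌋₊ with hj
  calc #(window N K y ∩ window N K z) = #(Finset.Icc (max i j - min i j + 1) K) := by
        rw [window, window, Finset.Ico_inter_Ico, Nat.card_Ico, Nat.card_Icc, ← hi, ← hj]
        omega
    _ ≤ _ := by
        refine Finset.card_le_card fun d hd => ?_
        rw [Finset.mem_Icc] at hd
        refine Finset.mem_filter.2 ⟨Finset.mem_Icc.2 ⟨by omega, hd.2⟩, ?_⟩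
        exact distToInt_sub_le_of_floor_lt hN hy hz (by omega) (by omega)

lemma sum_card_window_inter_le {x : ℕ → ℝ} (hx : ∀ n, 0 ≤ x n) {N : ℕ}
    (hN : 0 < N) (K : ℕ) :
    ∑ p ∈ Finset.Icc 1 N ×ˢ Finset.Icc 1 N, #(window N K (x p.1) ∩ window N K (x p.2)) ≤
      N * K + ∑ d ∈ Finset.Icc 1 K, pairCount x N ((d : ℕ) / N) := by
  rw [← Finset.sum_filter_add_sum_filter_not _ (fun p : ℕ × ℕ => p.1 = p.2)]
  gcongr ?_ + ?_
  · refine (Finset.sum_le_card_nsmul _ _ K fun p _ => ?_).trans ?_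
    · exact (Finset.card_le_card Finset.inter_subset_left).trans (card_window _ _ _).le
    · rw [smul_eq_mul]
      refine Nat.mul_le_mul_right _ ?_
      have h := (Finset.Icc 1 N).diag_card
      rw [Nat.card_Icc, Nat.add_sub_cancel] at h
      refine le_trans (Finset.card_le_card fun p hp => ?_) h.le
      simp only [Finset.mem_filter, Finset.mem_product] at hp
      exact Finset.mem_diag.2 ⟨hp.1.1, hp.2⟩
  · refine (Finset.sum_le_sum fun p _ => card_window_inter_le hN K (hx p.1) (hx p.2)).trans ?_
    have h := Finset.sum_card_bipartiteAbove_eq_sum_card_bipartiteBelow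
      (s := {p ∈ Finset.Icc 1 N ×ˢ Finset.Icc 1 N | ¬ p.1 = p.2}) (t := Finset.Icc 1 K)
      (fun p d => distToInt (x p.1 - x p.2) ≤ (d : ℕ) / N)
    simp only [Finset.bipartiteAbove, Finset.bipartiteBelow, Finset.filter_filter] at h
    exact h.le

/-- The second moment bound for the window counts around their mean. -/
lemma sum_window_count_sub_sq_le {x : ℕ → ℝ} (hx : ∀ n, x n ∈ Set.Ico (0 : ℝ) 1) {N K : ℕ}
    (hN : 0 < N) (hpair : ∀ d ∈ Finset.Icc 1 K, (pairCount x N (d / N) : ℝ) ≤ (2 * d + 1) * N) :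
    ∑ t ∈ Finset.range (N + K),
      ((#{n ∈ Finset.Icc 1 N | t ∈ window N K (x n)} : ℝ) - K) ^ 2 ≤ 3 * N * K + K ^ 3 := by
  have hW : ∀ n ∈ Finset.Icc 1 N, window N K (x n) ⊆ Finset.range (N + K) :=
    fun n _ => window_subset_range hN K (hx n)
  have h1 := sum_card_filter_mem _ _ _ hW
  simp only [card_window, Finset.sum_const, Nat.card_Icc, Nat.add_sub_cancel, smul_eq_mul] at h1
  have h2 := (sum_card_filter_mem_sq _ _ _ hW).trans_le
    (sum_card_window_inter_le (fun n => (hx n).1) hN K)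
  have h1' : ∑ t ∈ Finset.range (N + K),
      (#{n ∈ Finset.Icc 1 N | t ∈ window N K (x n)} : ℝ) = N * K := by exact_mod_cast h1
  have h2' : ∑ t ∈ Finset.range (N + K),
      (#{n ∈ Finset.Icc 1 N | t ∈ window N K (x n)} : ℝ) ^ 2 ≤
        N * K + ∑ d ∈ Finset.Icc 1 K, (pairCount x N (d / N) : ℝ) := by exact_mod_cast h2
  have h3 : ∀ K : ℕ, ∑ d ∈ Finset.Icc 1 K, (2 * (d : ℝ) + 1) * N = (K ^ 2 + 2 * K) * N := by
    intro K
    induction K with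
    | zero => simp
    | succ k ih =>
      rw [Finset.sum_Icc_succ_top (by omega), ih]
      push_cast
      ring
  have h4 := (Finset.sum_le_sum hpair).trans_eq (h3 K)
  simp only [sub_sq, Finset.sum_add_distrib, Finset.sum_sub_distrib, Finset.sum_const,
    Finset.card_range, nsmul_eq_mul, ← Finset.sum_mul, ← Finset.mul_sum, h1']
  push_cast
  nlinarith

lemma intervalCount_mul_le {x : ℕ → ℝ} (hx : ∀ n, x n ∈ Set.Ico (0 : ℝ) 1) {N K : ℕ}
    (hN : 0 < N) (hK : 0 < K)
    (hpair : ∀ d ∈ Finset.Icc 1 K, (pairCount x N (d / N) : ℝ) ≤ (2 * d + 1) * N)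
    {a b ε : ℝ} (ha : 0 ≤ a) (hab : a ≤ b) (hb : b ≤ 1) (hε : 0 < ε) :
    (intervalCount x N a b : ℝ) * K ≤
      (1 + ε) * K * (N * (b - a) + 1 + K) + (3 * N * K + K ^ 3) / (4 * ε * K) := by
  have hN' : (0 : ℝ) < N := by exact_mod_cast hN
  have hK' : (0 : ℝ) < K := by exact_mod_cast hK
  set w : ℕ → ℕ := fun t => #{n ∈ Finset.Icc 1 N | t ∈ window N K (x n)} with hw
  set T := Finset.Ico ⌊N * a⌋₊ (⌊N * b⌋₊ + K) with hT
  have hTsub : T ⊆ Finset.range (N + K) := by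
    intro t ht
    have : ⌊N * b⌋₊ ≤ N := Nat.floor_le_of_le (by nlinarith)
    simp only [hT, Finset.mem_Ico, Finset.mem_range] at *
    omega
  have hmono : ⌊N * a⌋₊ ≤ ⌊N * b⌋₊ := Nat.floor_mono (by gcongr)
  have hTcard : (#T : ℝ) ≤ N * (b - a) + 1 + K := by
    rw [hT, Nat.card_Ico, Nat.cast_sub (by omega)]
    push_cast
    have h₁ := Nat.floor_le (mul_nonneg hN'.le (ha.trans hab))
    have h₂ := Nat.lt_floor_add_one ((N : ℝ) * a)
    linarith
  have hcount : intervalCount x N a b * K ≤ ∑ t ∈ T, w t := by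
    have h := sum_card_filter_mem {n ∈ Finset.Icc 1 N | x n ∈ Set.Icc a b} T
      (fun n => window N K (x n)) (by
        intro n hn
        have hn' := (Finset.mem_filter.1 hn).2
        have h₁ : ⌊N * a⌋₊ ≤ ⌊N * x n⌋₊ := Nat.floor_mono (by gcongr; exact hn'.1)
        have h₂ : ⌊N * x n⌋₊ ≤ ⌊N * b⌋₊ := Nat.floor_mono (by gcongr; exact hn'.2)
        exact Finset.Ico_subset_Ico h₁ (by omega))
    simp only [card_window, Finset.sum_const, smul_eq_mul] at h
    rw [intervalCount, ← h]
    refine Finset.sum_le_sum fun t _ => Finset.card_le_card ?_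
    exact Finset.filter_subset_filter _ (Finset.filter_subset _ _)
  have hcount' : (intervalCount x N a b : ℝ) * K ≤ ∑ t ∈ T, (w t : ℝ) := by
    exact_mod_cast hcount
  have hamgm : ∀ t, (w t : ℝ) ≤ (1 + ε) * K + ((w t : ℝ) - K) ^ 2 / (4 * ε * K) := by
    intro t
    rw [← sub_le_iff_le_add', le_div_iff₀ (by positivity)]
    nlinarith [sq_nonneg ((w t : ℝ) - K - 2 * ε * K)]
  calc (intervalCount x N a b : ℝ) * K ≤ ∑ t ∈ T, (w t : ℝ) := hcount'
    _ ≤ ∑ t ∈ T, ((1 + ε) * K + ((w t : ℝ) - K) ^ 2 / (4 * ε * K)) :=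
        Finset.sum_le_sum fun t _ => hamgm t
    _ = (1 + ε) * K * #T + (∑ t ∈ T, ((w t : ℝ) - K) ^ 2) / (4 * ε * K) := by
        rw [Finset.sum_add_distrib, Finset.sum_const, nsmul_eq_mul, Finset.sum_div]
        ring
    _ ≤ _ := by
        gcongr
        exact (Finset.sum_le_sum_of_subset_of_nonneg hTsub fun t _ _ => sq_nonneg _).trans
          (sum_window_count_sub_sq_le hx hN hpair)

/-- Poissonian pair correlations bound the asymptotic frequency of each interval by its length. -/
lemma eventually_intervalCount_div_le {x : ℕ → ℝ} (hx : ∀ n, x n ∈ Set.Ico (0 : ℝ) 1)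
    (hpair : ∀ s : ℝ, 0 < s →
      Tendsto (fun N : ℕ => (pairCount x N (s / N) : ℝ) / N) atTop (nhds (2 * s)))
    {a b δ : ℝ} (ha : 0 ≤ a) (hab : a ≤ b) (hb : b ≤ 1) (hδ : 0 < δ) :
    ∀ᶠ N : ℕ in atTop, (intervalCount x N a b : ℝ) / N ≤ b - a + δ := by
  set ε := δ / 4 with hε
  have hε0 : 0 < ε := by positivity
  obtain ⟨K, hKε⟩ := exists_nat_gt (1 / ε ^ 2)
  have hK' : (0 : ℝ) < K := lt_trans (by positivity) hKε
  have hK : 0 < K := by exact_mod_cast hK'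
  have hpairs : ∀ᶠ N : ℕ in atTop,
      ∀ d ∈ Finset.Icc 1 K, (pairCount x N (d / N) : ℝ) / N < 2 * d + 1 := by
    rw [Finset.eventually_all]
    intro d hd
    have hd' : (0 : ℝ) < d := by exact_mod_cast (Finset.mem_Icc.1 hd).1
    exact (hpair d hd').eventually_lt_const (by linarith)
  obtain ⟨M, hM⟩ := exists_nat_gt (((1 + ε) * (1 + K) + K / (4 * ε)) / ε)
  filter_upwards [hpairs, eventually_gt_atTop 0, eventually_ge_atTop M] with N hp hN hNM
  have hN' : (0 : ℝ) < N := by exact_mod_cast hN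
  have h := intervalCount_mul_le hx hN hK (fun d hd => ((div_lt_iff₀ hN').1 (hp d hd)).le)
    ha hab hb hε0
  rw [div_le_iff₀ hN']
  have hMN : (1 + ε) * (1 + K) + K / (4 * ε) ≤ ε * N := by
    have h' : (M : ℝ) ≤ N := by exact_mod_cast hNM
    have := (div_lt_iff₀ hε0).1 (hM.trans_le h')
    linarith
  have hKN : 3 * (N : ℝ) / (4 * ε * K) ≤ ε * N := by
    rw [div_le_iff₀ (by positivity)]
    have : 1 < K * ε ^ 2 := (div_lt_iff₀ (by positivity)).1 hKε
    nlinarith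
  have hsplit : (1 + ε) * K * (N * (b - a) + 1 + K) + (3 * N * K + K ^ 3) / (4 * ε * K) =
      ((1 + ε) * (b - a) * N + ((1 + ε) * (1 + K) + K / (4 * ε)) + 3 * N / (4 * ε * K)) * K := by
    field_simp
    ring
  rw [hsplit] at h
  have h' := le_of_mul_le_mul_right h hK'
  have hba : ε * (b - a) * N ≤ ε * N := by
    have : ε * (b - a) ≤ ε := by nlinarith
    gcongr
  have : δ = 4 * ε := by rw [hε]; ring
  rw [this]
  nlinarith

lemma le_intervalCount_add {x : ℕ → ℝ} (hx : ∀ n, x n ∈ Set.Ico (0 : ℝ) 1) (N : ℕ) (a b : ℝ) :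
    N ≤ intervalCount x N 0 a + intervalCount x N a b + intervalCount x N b 1 := by
  have h : Finset.Icc 1 N ⊆ ({n ∈ Finset.Icc 1 N | x n ∈ Set.Icc 0 a} ∪
      {n ∈ Finset.Icc 1 N | x n ∈ Set.Icc a b}) ∪ {n ∈ Finset.Icc 1 N | x n ∈ Set.Icc b 1} := by
    intro n hn
    simp only [Finset.mem_union, Finset.mem_filter, hn, true_and, Set.mem_Icc]
    have h₀ := (hx n).1
    have h₁ := (hx n).2.le
    rcases le_total (x n) a with h | h <;> rcases le_total (x n) b with h' | h' <;> tauto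
  have h' := Finset.card_le_card h
  rw [Nat.card_Icc, Nat.add_sub_cancel] at h'
  refine h'.trans ((Finset.card_union_le _ _).trans ?_)
  gcongr ?_ + _
  exact Finset.card_union_le _ _

/-- A sequence with Poissonian pair correlations is equidistributed. -/
lemma tendsto_intervalCount_div {x : ℕ → ℝ} (hx : ∀ n, x n ∈ Set.Ico (0 : ℝ) 1)
    (hpair : ∀ s : ℝ, 0 < s →
      Tendsto (fun N : ℕ => (pairCount x N (s / N) : ℝ) / N) atTop (nhds (2 * s)))
    {a b : ℝ} (ha : 0 ≤ a) (hab : a ≤ b) (hb : b ≤ 1) :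
    Tendsto (fun N : ℕ => (intervalCount x N a b : ℝ) / N) atTop (nhds (b - a)) := by
  rw [Metric.tendsto_nhds]
  intro δ hδ
  have hδ' : 0 < δ / 3 := by positivity
  filter_upwards [eventually_intervalCount_div_le hx hpair ha hab hb hδ',
    eventually_intervalCount_div_le hx hpair le_rfl ha (hab.trans hb) hδ',
    eventually_intervalCount_div_le hx hpair (ha.trans hab) hb le_rfl hδ',
    eventually_gt_atTop 0] with N h h₀ h₁ hN
  have hN' : (0 : ℝ) < N := by exact_mod_cast hN
  have hcover : (N : ℝ) ≤
      intervalCount x N 0 a + intervalCount x N a b + intervalCount x N b 1 := by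
    exact_mod_cast le_intervalCount_add hx N a b
  have hcover' := div_le_div_of_nonneg_right hcover hN'.le
  rw [div_self hN'.ne', add_div, add_div] at hcover'
  rw [Real.dist_eq, abs_lt]
  constructor <;> linarith

theorem stmt_11 (x : ℕ → ℝ) (hx : ∀ n, x n ∈ Set.Ico (0 : ℝ) 1)
    (hne : ¬ (∀ a b : ℝ, 0 ≤ a → a ≤ b → b ≤ 1 →
      Tendsto (fun N : ℕ =>
        (((Finset.Icc 1 N).filter (fun n => x n ∈ Set.Icc a b)).card : ℝ) / N)
        atTop (nhds (b - a)))) :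
    ∃ s : ℝ, 0 < s ∧
      ¬ Tendsto (fun N : ℕ =>
        (((Finset.Icc 1 N ×ˢ Finset.Icc 1 N).filter (fun p : ℕ × ℕ =>
          p.1 ≠ p.2 ∧ distToInt (x p.1 - x p.2) ≤ s / N)).card : ℝ) / N)
        atTop (nhds (2 * s)) := by
  by_contra! h
  exact hne fun a b ha hab hb => by
    simpa only [intervalCount] using tendsto_intervalCount_div hx h ha hab hb
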